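/- Let (R, m) be a commutative Noetherian local ring of Krull dimension n and let I be an ideal of R with cd(I) = ht(I) = h, where cd(I) = cd(I,R) and ht(I) is the height of I. Then there is an isomorphism of R-modules H^{n−h}_m(H^h_I(R)) ≅ H^n_m(R). -/

import Mathlib

universe u

open CategoryTheory

/-- The cohomological dimension of `M` with respect to `I`:
`cd(I,M) = sup { i ∈ ℕ | H^i_I(M) ≠ 0 }`, as an element of `ℕ∞`. -/
noncomputable def cohomologicalDimension {R : Type u} [CommRing R] (I : Ideal R)
    (M : ModuleCat.{u} R) : ℕ∞ :=
  sSup {c : ℕ∞ | ∃ i : ℕ, c = i ∧ Nontrivial ((localCohomology I i).obj M)}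

/-- The height of an ideal: the infimum of the heights of the prime ideals containing it. -/
noncomputable def idealHeight {R : Type u} [CommRing R] (I : Ideal R) : ℕ∞ :=
  ⨅ (p : PrimeSpectrum R) (_ : I ≤ p.asIdeal), Order.height p

/-!
Write `Γ_I(M)` for the elements of `M` killed by a power of `I` and `m` for the maximal ideal. The
modules `Γ_I(M)` and `M/Γ_I(M)` embed into injectives which are `I`-power-torsion, respectively
`I`-torsion-free, because over a Noetherian ring `Γ_I` preserves injectives by Artin–Rees.

An `I`-power-torsion module `T` has `H^p_m(T) = 0` for `p > dim R/I`: as `m` is the radical of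
`I + (s₁, …, s_r)` with `r ≤ dim R/I`, one adjoins the `sᵢ` one at a time, comparing `T` with its
localization at `sᵢ`, which has no local cohomology; kernel and cokernel are `sᵢ`-power-torsion.

If `H^q_I(M) = 0` for `q > h` and `d ≥ dim R/I`, then `H^d_m(H^h_I(M)) ≅ H^{d+h}_m(M)` by induction
on `h`. For `h = 0` the quotient `M/Γ_I(M)` has no local cohomology at `I`, hence none at `m`, so
`M` may be replaced by `Γ_I(M) = H^0_I(M)`. For `h > 0`, passing to `M/Γ_I(M)` changes neither side;
embedding it into an `I`-torsion-free injective, which has no local cohomology at `I` or `m`, and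
taking the cokernel shifts both sides down by one degree. When `cd(I) = ht(I) = h`, the inequality
`dim R/I + ht(I) ≤ dim R` allows `d = n - h`.
-/

universe v w

open Limits Opposite

section Exactness

variable {D : Type*} [Category* D] [Abelian D]

lemma exact_unop_conj {X₁ X₂ X₃ Y₁ Y₂ Y₃ : Dᵒᵖ} {f : Y₁ ⟶ Y₂} {g : Y₂ ⟶ Y₃} {w : f ≫ g = 0}
    (h : (ShortComplex.mk f g w).Exact) (e₁ : X₁ ≅ Y₁) (e₂ : X₂ ≅ Y₂) (e₃ : X₃ ≅ Y₃) :
    ∃ w, (ShortComplex.mk (e₂.hom ≫ g ≫ e₃.inv).unop (e₁.hom ≫ f ≫ e₂.inv).unop w).Exact := by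
  have w' : (e₁.hom ≫ f ≫ e₂.inv) ≫ e₂.hom ≫ g ≫ e₃.inv = 0 := by simp [← Category.assoc f, w]
  have h' : (ShortComplex.mk _ _ w').Exact :=
    (ShortComplex.exact_iff_of_iso (ShortComplex.isoMk e₁ e₂ e₃)).2 h
  exact ⟨_, h'.unop⟩

lemma exact_of_exact_app {K : Type*} [Category* K] {F G H : K ⥤ D} {f : F ⟶ G} {g : G ⟶ H}
    (h : ∀ k, ∃ w, (ShortComplex.mk (f.app k) (g.app k) w).Exact) :
    ∃ w, (ShortComplex.mk f g w).Exact := by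
  have w : f ≫ g = 0 := by
    ext k
    exact (h k).1
  refine ⟨w, ?_⟩
  rw [ShortComplex.exact_iff_isZero_homology, Functor.isZero_iff]
  exact fun k ↦ ((ShortComplex.exact_iff_isZero_homology _).1 (h k).2).of_iso
    ((ShortComplex.mk f g w).mapHomologyIso ((evaluation K D).obj k)).symm

lemma exact_of_iso_of_exact {S : ShortComplex D} (h : S.Exact) {X₁ X₂ X₃ : D} {f : X₁ ⟶ X₂}
    {g : X₂ ⟶ X₃} (e₁ : X₁ ≅ S.X₁) (e₂ : X₂ ≅ S.X₂) (e₃ : X₃ ≅ S.X₃)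
    (hf : e₁.hom ≫ S.f = f ≫ e₂.hom) (hg : e₂.hom ≫ S.g = g ≫ e₃.hom) :
    ∃ w, (ShortComplex.mk f g w).Exact := by
  have w : f ≫ g = 0 := by
    rw [← cancel_mono e₃.hom, Category.assoc, ← hg, ← Category.assoc, ← hf, Category.assoc, S.zero,
      comp_zero, zero_comp]
  exact ⟨w, (ShortComplex.exact_iff_of_iso (ShortComplex.isoMk e₁ e₂ e₃ hf hg)).2 h⟩

lemma shortExact_cokernel {X Y : D} (f : X ⟶ Y) [Mono f] :
    (ShortComplex.mk f (cokernel.π f) (cokernel.condition f)).ShortExact where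
  exact := ShortComplex.exact_cokernel f

lemma injective_X₃_of_shortExact {S : ShortComplex D}
    (hS : S.ShortExact) [Injective S.X₁] [Injective S.X₂] : Injective S.X₃ :=
  let s := hS.splittingOfInjective
  (Retract.mk s.s S.g s.s_g).injective

end Exactness

section LinearCategory

variable {R : Type*} [Semiring R]

lemma isIso_smul_id_of_mono {C : Type*} [Category* C] [Preadditive C] [Linear R C] {y : R} (E : C)
    [Injective E] [Mono (y • 𝟙 E)] : IsIso (y • 𝟙 E) := by
  have h := Injective.comp_factorThru (𝟙 E) (y • 𝟙 E)
  exact ⟨_, h, by rwa [Linear.comp_smul, Category.comp_id, ← Category.id_comp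
    (Injective.factorThru _ _), ← Linear.smul_comp]⟩

lemma isIso_smul_id_cokernel {C : Type*} [Category* C] [Preadditive C] [HasCokernels C]
    [Linear R C] {y : R} {X Y : C} (f : X ⟶ Y) [IsIso (y • 𝟙 X)] [IsIso (y • 𝟙 Y)] :
    IsIso (y • 𝟙 (cokernel f)) := by
  have h : y • 𝟙 (cokernel f) = cokernel.map f f (y • 𝟙 X) (y • 𝟙 Y) (by simp) := by
    rw [← cancel_epi (cokernel.π f)]
    simp
  rw [h]
  infer_instance

end LinearCategory

section Ext

variable {R : Type w} [Ring R] {C : Type u} [Category.{v} C] [Abelian C] [Linear R C]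

variable (R) in
/-- The complex `Hom(P, Y)`, encoded as a chain complex in `(ModuleCat R)ᵒᵖ` since this is the
shape in which `Ext` is defined. -/
noncomputable abbrev homComplex (P : ChainComplex C ℕ) (Y : C) :
    ChainComplex (ModuleCat.{v} R)ᵒᵖ ℕ :=
  (((linearYoneda R C).obj Y).rightOp.mapHomologicalComplex _).obj P

variable (R) in
/-- The morphism `Hom(P, Y) ⟶ Hom(P, Z)` induced by `f : Y ⟶ Z`, in `(ModuleCat R)ᵒᵖ`. -/
noncomputable abbrev homComplexMap (P : ChainComplex C ℕ) {Y Z : C} (f : Y ⟶ Z) :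
    homComplex R P Z ⟶ homComplex R P Y :=
  (NatTrans.mapHomologicalComplex (NatTrans.rightOp ((linearYoneda R C).map f)) _).app P

lemma comp_f_comp_g_eq_zero (S : ShortComplex C) {X : C} (x : X ⟶ S.X₁) :
    (x ≫ S.f) ≫ S.g = 0 := by
  simp

variable (R) in
/-- The short complex `0 ⟶ Hom(P, S.X₁) ⟶ Hom(P, S.X₂) ⟶ Hom(P, S.X₃) ⟶ 0`, in
`(ModuleCat R)ᵒᵖ`. -/
@[simps]
noncomputable def homShortComplex (P : ChainComplex C ℕ) (S : ShortComplex C) :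
    ShortComplex (ChainComplex (ModuleCat.{v} R)ᵒᵖ ℕ) where
  X₁ := homComplex R P S.X₃
  X₂ := homComplex R P S.X₂
  X₃ := homComplex R P S.X₁
  f := homComplexMap R P S.g
  g := homComplexMap R P S.f
  zero := by
    ext n
    apply Quiver.Hom.unop_inj
    ext (x : P.X n ⟶ S.X₁)
    exact comp_f_comp_g_eq_zero S x

lemma homShortComplex_shortExact (P : ChainComplex C ℕ) [∀ n, Projective (P.X n)]
    {S : ShortComplex C} (hS : S.ShortExact) : (homShortComplex R P S).ShortExact := by
  have := hS.mono_f
  have := hS.epi_g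
  refine HomologicalComplex.shortExact_of_degreewise_shortExact _ fun n ↦
    (ShortComplex.shortExact_iff_unop _).2 (ModuleCat.shortComplex_shortExact _ ?_ ?_ ?_)
  · intro (x : P.X n ⟶ S.X₂)
    refine ⟨fun hx ↦ ⟨hS.exact.lift x hx, hS.exact.lift_f x hx⟩, ?_⟩
    rintro ⟨y : P.X n ⟶ S.X₁, rfl⟩
    exact comp_f_comp_g_eq_zero S y
  · exact fun x y hxy ↦ (cancel_mono S.f).1 hxy
  · exact fun y ↦ ⟨Projective.factorThru (P := P.X n) y S.g,
      Projective.factorThru_comp (P := P.X n) y S.g⟩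

variable (R) in
/-- The functoriality of `homShortComplex` in the complex. -/
@[simps]
noncomputable def homShortComplexPrecomp {P Q : ChainComplex C ℕ} (φ : P ⟶ Q)
    (S : ShortComplex C) : homShortComplex R P S ⟶ homShortComplex R Q S where
  τ₁ := (((linearYoneda R C).obj S.X₃).rightOp.mapHomologicalComplex _).map φ
  τ₂ := (((linearYoneda R C).obj S.X₂).rightOp.mapHomologicalComplex _).map φ
  τ₃ := (((linearYoneda R C).obj S.X₁).rightOp.mapHomologicalComplex _).map φ
  comm₁₂ := ((NatTrans.mapHomologicalComplex
    (NatTrans.rightOp ((linearYoneda R C).map S.g)) _).naturality φ)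
  comm₂₃ := ((NatTrans.mapHomologicalComplex
    (NatTrans.rightOp ((linearYoneda R C).map S.f)) _).naturality φ)

variable (R) in
/-- The connecting homomorphism of `homShortComplex R P S`. -/
noncomputable def homComplexδ {S : ShortComplex C} (hS : S.ShortExact) (P : ChainComplex C ℕ)
    [∀ n, Projective (P.X n)] (i : ℕ) :
    (HomologicalComplex.homologyFunctor _ _ (i + 1)).obj (homComplex R P S.X₁) ⟶
      (HomologicalComplex.homologyFunctor _ _ i).obj (homComplex R P S.X₃) :=
  (homShortComplex_shortExact P hS).δ (i + 1) i (ComplexShape.down_mk _ _ rfl)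

lemma homComplexδ_naturality {S : ShortComplex C} (hS : S.ShortExact) {P Q : ChainComplex C ℕ}
    [∀ n, Projective (P.X n)] [∀ n, Projective (Q.X n)] (φ : P ⟶ Q) (i : ℕ) :
    homComplexδ R hS P i ≫ (HomologicalComplex.homologyFunctor _ _ i).map
        ((((linearYoneda R C).obj S.X₃).rightOp.mapHomologicalComplex _).map φ) =
      (HomologicalComplex.homologyFunctor _ _ (i + 1)).map
        ((((linearYoneda R C).obj S.X₁).rightOp.mapHomologicalComplex _).map φ) ≫
      homComplexδ R hS Q i :=
  HomologicalComplex.HomologySequence.δ_naturality (homShortComplexPrecomp R φ S)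
    (homShortComplex_shortExact P hS) (homShortComplex_shortExact Q hS)
    (i + 1) i (ComplexShape.down_mk _ _ rfl)

variable [EnoughProjectives C]

variable (R) in
/-- The connecting homomorphism `Ext^i(X, S.X₃) ⟶ Ext^(i+1)(X, S.X₁)`, natural in `X`. -/
noncomputable def extδ {S : ShortComplex C} (hS : S.ShortExact) (i : ℕ) :
    (Ext R C i).flip.obj S.X₃ ⟶ (Ext R C (i + 1)).flip.obj S.X₁ where
  app X := (((projectiveResolution X.unop).isoLeftDerivedObj _ _).hom ≫
    homComplexδ R hS (projectiveResolution X.unop).complex i ≫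
    ((projectiveResolution X.unop).isoLeftDerivedObj _ _).inv).unop
  naturality X Y f := by
    apply Quiver.Hom.op_inj
    let P := projectiveResolution X.unop
    let Q := projectiveResolution Y.unop
    let φ := ProjectiveResolution.lift f.unop Q P
    have hφ : φ.f 0 ≫ P.π.f 0 = Q.π.f 0 ≫ f.unop :=
      ProjectiveResolution.lift_commutes_zero f.unop Q P
    change (_ ≫ homComplexδ R hS Q.complex i ≫ _) ≫
        (((linearYoneda R C).obj S.X₃).rightOp.leftDerived i).map f.unop =
      (((linearYoneda R C).obj S.X₁).rightOp.leftDerived (i + 1)).map f.unop ≫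
        _ ≫ homComplexδ R hS P.complex i ≫ _
    rw [Category.assoc, Category.assoc,
      ProjectiveResolution.isoLeftDerivedObj_inv_naturality f.unop Q P φ hφ,
      ProjectiveResolution.isoLeftDerivedObj_hom_naturality_assoc f.unop Q P φ hφ]
    simp only [Functor.comp_map]
    rw [← Category.assoc (homComplexδ R hS _ i), homComplexδ_naturality hS φ, Category.assoc]

lemma ext_flip_map_app (i : ℕ) {Y Z : C} (f : Y ⟶ Z) (X : Cᵒᵖ) :
    ((Ext R C i).flip.map f).app X =
      (((projectiveResolution X.unop).isoLeftDerivedObj _ _).hom ≫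
        HomologicalComplex.homologyMap (homComplexMap R (projectiveResolution X.unop).complex f) i ≫
        ((projectiveResolution X.unop).isoLeftDerivedObj _ _).inv).unop := by
  change (((NatTrans.rightOp ((linearYoneda R C).map f)).leftDerived i).app X.unop).unop = _
  rw [ProjectiveResolution.leftDerived_app_eq _ (projectiveResolution X.unop)]
  rfl

variable {S : ShortComplex C} (hS : S.ShortExact) (i : ℕ)

include hS in
lemma ext_exact₁ :
    ∃ w, (ShortComplex.mk (extδ R hS i) ((Ext R C (i + 1)).flip.map S.f) w).Exact := by
  refine exact_of_exact_app fun X ↦ ?_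
  rw [ext_flip_map_app]
  exact exact_unop_conj ((homShortComplex_shortExact (projectiveResolution X.unop).complex
    hS).homology_exact₃ (i + 1) i (ComplexShape.down_mk _ _ rfl)) _ _ _

include hS in
lemma ext_exact₂ :
    ∃ w, (ShortComplex.mk ((Ext R C i).flip.map S.f) ((Ext R C i).flip.map S.g) w).Exact := by
  refine exact_of_exact_app fun X ↦ ?_
  rw [ext_flip_map_app, ext_flip_map_app]
  exact exact_unop_conj ((homShortComplex_shortExact (projectiveResolution X.unop).complex
    hS).homology_exact₂ i) _ _ _

include hS in
lemma ext_exact₃ :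
    ∃ w, (ShortComplex.mk ((Ext R C i).flip.map S.g) (extδ R hS i) w).Exact := by
  refine exact_of_exact_app fun X ↦ ?_
  rw [ext_flip_map_app]
  exact exact_unop_conj ((homShortComplex_shortExact (projectiveResolution X.unop).complex
    hS).homology_exact₁ (i + 1) i (ComplexShape.down_mk _ _ rfl)) _ _ _

lemma isZero_ext_succ_of_injective (i : ℕ) (X : Cᵒᵖ) (Y : C) [Injective Y] :
    IsZero (((Ext R C (i + 1)).obj X).obj Y) := by
  let P := projectiveResolution X.unop
  refine IsZero.of_iso ?_ (P.isoExt (i + 1) Y)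
  rw [← HomologicalComplex.exactAt_iff_isZero_homology,
    HomologicalComplex.exactAt_iff' _ i (i + 1) (i + 2) (by simp) (by simp),
    ShortComplex.moduleCat_exact_iff]
  intro x hx
  have hP : (P.complex.sc' (i + 2) (i + 1) i).Exact := by
    rw [← HomologicalComplex.exactAt_iff' _ (i + 2) (i + 1) i (by simp) (by simp)]
    exact P.complex_exactAt_succ i
  exact ⟨hP.descToInjective x hx, hP.comp_descToInjective x hx⟩

instance preservesFiniteLimits_linearYoneda_obj (Y : C) :
    PreservesFiniteLimits ((linearYoneda R C).obj Y) := by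
  have : PreservesFiniteLimits ((linearYoneda R C).obj Y ⋙ forget _) :=
    inferInstanceAs (PreservesFiniteLimits (yoneda.obj Y))
  exact preservesFiniteLimits_of_reflects_of_preserves _ (forget (ModuleCat R))

lemma fromLeftDerivedZero'_naturality_functor {C D : Type*} [Category* C] [Category* D] [Abelian C]
    [Abelian D] {F G : C ⥤ D} [F.Additive] [G.Additive] (α : F ⟶ G) {X : C}
    (P : ProjectiveResolution X) :
    HomologicalComplex.opcyclesMap ((NatTrans.mapHomologicalComplex α _).app P.complex) 0 ≫
      P.fromLeftDerivedZero' G = P.fromLeftDerivedZero' F ≫ α.app X := by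
  rw [← cancel_epi (HomologicalComplex.pOpcycles _ _)]
  rw [HomologicalComplex.p_opcyclesMap_assoc,
    ProjectiveResolution.pOpcycles_comp_fromLeftDerivedZero'_assoc,
    ProjectiveResolution.pOpcycles_comp_fromLeftDerivedZero']
  exact (α.naturality (P.π.f 0)).symm

lemma fromLeftDerivedZero_naturality {C D : Type*} [Category* C] [Category* D] [Abelian C]
    [EnoughProjectives C] [Abelian D] {F G : C ⥤ D} [F.Additive] [G.Additive] (α : F ⟶ G) (X : C) :
    (α.leftDerived 0).app X ≫ G.fromLeftDerivedZero.app X =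
      F.fromLeftDerivedZero.app X ≫ α.app X := by
  let P := projectiveResolution X
  rw [ProjectiveResolution.fromLeftDerivedZero_eq P, ProjectiveResolution.fromLeftDerivedZero_eq P,
    ProjectiveResolution.leftDerived_app_eq α P]
  simp only [Category.assoc, Iso.inv_hom_id_assoc]
  congr 1
  refine (HomologicalComplex.homologyι_naturality_assoc _ _ _).trans ?_
  refine Eq.trans ?_ (Category.assoc _ _ _).symm
  exact congrArg _ (fromLeftDerivedZero'_naturality_functor α P)

instance isIso_fromLeftDerivedZero_linearYoneda (X Y : C) :
    IsIso ((((linearYoneda R C).obj Y).rightOp.fromLeftDerivedZero).app X) := by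
  have : PreservesFiniteColimits ((linearYoneda R C).obj Y).rightOp :=
    preservesFiniteColimits_rightOp _
  infer_instance

variable (R C) in
/-- `Ext⁰` is `Hom`. -/
noncomputable def linearCoyonedaIsoExtZero : linearCoyoneda R C ≅ Ext R C 0 :=
  NatIso.ofComponents (fun X ↦ NatIso.ofComponents
    (fun Y ↦ (asIso
      ((((linearYoneda R C).obj Y).rightOp.fromLeftDerivedZero).app X.unop)).unop)
    (fun {Y Z} f ↦ by
      apply Quiver.Hom.op_inj
      exact (fromLeftDerivedZero_naturality
        (NatTrans.rightOp ((linearYoneda R C).map f)) X.unop).symm))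
    (fun {X Y} f ↦ by
      ext Z : 2
      apply Quiver.Hom.op_inj
      exact ((((linearYoneda R C).obj Z).rightOp.fromLeftDerivedZero).naturality
        f.unop).symm)

end Ext

section LocalCohomology

variable {R : Type u} [CommRing R] (J : Ideal R)

instance hasExactColimitsOfShape_nat_op_op_moduleCat :
    HasExactColimitsOfShape ℕᵒᵖᵒᵖ (ModuleCat.{u} R) :=
  have := AB5OfSize_of_univLE.{0, 0, u, u} (ModuleCat.{u} R)
  AB5OfSize.ofShape _

/-- The functor sending a presheaf `F` on `R`-modules to `colim_t F(R/J^t)`. -/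
noncomputable def colimQuotientPow :
    ((ModuleCat.{u} R)ᵒᵖ ⥤ ModuleCat.{u} R) ⥤ ModuleCat.{u} R :=
  (Functor.whiskeringLeft _ _ _).obj
    (localCohomology.ringModIdeals (localCohomology.idealPowersDiagram J)).op ⋙ colim

instance preservesFiniteLimits_colimQuotientPow : PreservesFiniteLimits (colimQuotientPow J) :=
  comp_preservesFiniteLimits _ _

instance preservesFiniteColimits_colimQuotientPow : PreservesFiniteColimits (colimQuotientPow J) :=
  comp_preservesFiniteColimits _ _

/-- Local cohomology as the composite of `Ext` with an exact functor. -/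
noncomputable def localCohomologyIso (i : ℕ) :
    localCohomology J i ≅ (Ext R (ModuleCat.{u} R) i).flip ⋙ colimQuotientPow J :=
  colimitIsoFlipCompColim _

variable {J}

lemma isZero_localCohomology_succ_of_injective (i : ℕ) (E : ModuleCat.{u} R) [Injective E] :
    IsZero ((localCohomology J (i + 1)).obj E) := by
  refine IsZero.of_iso ?_ ((localCohomologyIso J (i + 1)).app E)
  exact (colimQuotientPow J).map_isZero
    (Functor.isZero _ fun X ↦ isZero_ext_succ_of_injective i X E)

variable {S : ShortComplex (ModuleCat.{u} R)} (hS : S.ShortExact) (i : ℕ)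

variable (J) in
/-- The connecting homomorphism of local cohomology. -/
noncomputable def localCohomologyδ :
    (localCohomology J i).obj S.X₃ ⟶ (localCohomology J (i + 1)).obj S.X₁ :=
  (localCohomologyIso J i).hom.app S.X₃ ≫ (colimQuotientPow J).map (extδ R hS i) ≫
    (localCohomologyIso J (i + 1)).inv.app S.X₁

lemma localCohomologyIso_hom_comp_map_extδ :
    (localCohomologyIso J i).hom.app S.X₃ ≫ (colimQuotientPow J).map (extδ R hS i) =
      localCohomologyδ J hS i ≫ (localCohomologyIso J (i + 1)).hom.app S.X₁ := by
  rw [localCohomologyδ, Category.assoc, Category.assoc, Iso.inv_hom_id_app]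
  exact congrArg _ (Category.comp_id _).symm

include hS in
lemma localCohomology_exact₁ :
    ∃ w, (ShortComplex.mk (localCohomologyδ J hS i)
      ((localCohomology J (i + 1)).map S.f) w).Exact := by
  obtain ⟨w, hw⟩ := ext_exact₁ (R := R) hS i
  exact exact_of_iso_of_exact (hw.map (colimQuotientPow J)) ((localCohomologyIso J i).app S.X₃)
    ((localCohomologyIso J (i + 1)).app S.X₁) ((localCohomologyIso J (i + 1)).app S.X₂)
    (localCohomologyIso_hom_comp_map_extδ hS i)
    ((localCohomologyIso J (i + 1)).hom.naturality S.f).symm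

include hS in
lemma localCohomology_exact₂ :
    ∃ w, (ShortComplex.mk ((localCohomology J i).map S.f)
      ((localCohomology J i).map S.g) w).Exact := by
  obtain ⟨w, hw⟩ := ext_exact₂ (R := R) hS i
  exact exact_of_iso_of_exact (hw.map (colimQuotientPow J)) ((localCohomologyIso J i).app S.X₁)
    ((localCohomologyIso J i).app S.X₂) ((localCohomologyIso J i).app S.X₃)
    ((localCohomologyIso J i).hom.naturality S.f).symm
    ((localCohomologyIso J i).hom.naturality S.g).symm

include hS in
lemma localCohomology_exact₃ :
    ∃ w, (ShortComplex.mk ((localCohomology J i).map S.g)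
      (localCohomologyδ J hS i) w).Exact := by
  obtain ⟨w, hw⟩ := ext_exact₃ (R := R) hS i
  exact exact_of_iso_of_exact (hw.map (colimQuotientPow J)) ((localCohomologyIso J i).app S.X₂)
    ((localCohomologyIso J i).app S.X₃) ((localCohomologyIso J (i + 1)).app S.X₁)
    ((localCohomologyIso J i).hom.naturality S.g).symm
    (localCohomologyIso_hom_comp_map_extδ hS i)

end LocalCohomology

section LongExactSequence

variable {R : Type u} [CommRing R] {J : Ideal R} {S : ShortComplex (ModuleCat.{u} R)}

lemma isZero_localCohomology_succ_X₁ (hS : S.ShortExact) {i : ℕ}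
    (h₃ : IsZero ((localCohomology J i).obj S.X₃))
    (h₂ : IsZero ((localCohomology J (i + 1)).obj S.X₂)) :
    IsZero ((localCohomology J (i + 1)).obj S.X₁) :=
  (localCohomology_exact₁ hS i).2.isZero_of_both_zeros (h₃.eq_of_src _ _) (h₂.eq_of_tgt _ _)

lemma isZero_localCohomology_X₂ (hS : S.ShortExact) {i : ℕ}
    (h₁ : IsZero ((localCohomology J i).obj S.X₁))
    (h₃ : IsZero ((localCohomology J i).obj S.X₃)) :
    IsZero ((localCohomology J i).obj S.X₂) :=
  (localCohomology_exact₂ hS i).2.isZero_of_both_zeros (h₁.eq_of_src _ _) (h₃.eq_of_tgt _ _)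

lemma isZero_localCohomology_X₃ (hS : S.ShortExact) {i : ℕ}
    (h₂ : IsZero ((localCohomology J i).obj S.X₂))
    (h₁ : IsZero ((localCohomology J (i + 1)).obj S.X₁)) :
    IsZero ((localCohomology J i).obj S.X₃) :=
  (localCohomology_exact₃ hS i).2.isZero_of_both_zeros (h₂.eq_of_src _ _) (h₁.eq_of_tgt _ _)

lemma isIso_localCohomologyδ (hS : S.ShortExact) {i : ℕ}
    (h₂ : IsZero ((localCohomology J i).obj S.X₂))
    (h₂' : IsZero ((localCohomology J (i + 1)).obj S.X₂)) :
    IsIso (localCohomologyδ J hS i) :=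
  have := (localCohomology_exact₃ (J := J) hS i).2.mono_g (h₂.eq_of_src _ _)
  have := (localCohomology_exact₁ (J := J) hS i).2.epi_f (h₂'.eq_of_tgt _ _)
  isIso_of_mono_of_epi _

lemma isIso_localCohomology_map_g (hS : S.ShortExact) {i : ℕ}
    (h₁ : IsZero ((localCohomology J i).obj S.X₁))
    (h₁' : IsZero ((localCohomology J (i + 1)).obj S.X₁)) :
    IsIso ((localCohomology J i).map S.g) :=
  have := (localCohomology_exact₂ (J := J) hS i).2.mono_g (h₁.eq_of_src _ _)
  have := (localCohomology_exact₃ (J := J) hS i).2.epi_f (h₁'.eq_of_tgt _ _)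
  isIso_of_mono_of_epi _

lemma isZero_localCohomology_succ_X₁_iff_epi (hS : S.ShortExact) {i : ℕ}
    (h₂ : IsZero ((localCohomology J (i + 1)).obj S.X₂)) :
    IsZero ((localCohomology J (i + 1)).obj S.X₁) ↔ Epi ((localCohomology J i).map S.g) := by
  obtain ⟨w₃, h₃⟩ := localCohomology_exact₃ (J := J) hS i
  obtain ⟨w₁, h₁⟩ := localCohomology_exact₁ (J := J) hS i
  refine ⟨fun h ↦ h₃.epi_f (h.eq_of_tgt _ _), fun _ ↦ ?_⟩
  exact h₁.isZero_of_both_zeros ((cancel_epi ((localCohomology J i).map S.g)).1 (by simpa using w₃))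
    (h₂.eq_of_tgt _ _)

end LongExactSequence

section PrimaryComponent

variable {R : Type u} [CommRing R] {J : Ideal R} {M : Type v} [AddCommGroup M] [Module R M]
  {N : Type w} [AddCommGroup N] [Module R N]

lemma mem_primaryComponent {x : M} :
    x ∈ J.primaryComponent M ↔ ∃ t : ℕ, ∀ a ∈ J ^ t, a • x = 0 := by
  simp [Ideal.primaryComponent_mem]

lemma mem_primaryComponent_span_singleton {y : R} {x : M} :
    x ∈ (Ideal.span {y}).primaryComponent M ↔ ∃ t : ℕ, y ^ t • x = 0 := by
  simp only [mem_primaryComponent, Ideal.span_singleton_pow, Ideal.mem_span_singleton']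
  refine exists_congr fun t ↦ ⟨fun h ↦ h _ ⟨1, one_mul _⟩, ?_⟩
  rintro h _ ⟨b, rfl⟩
  rw [mul_smul, h, smul_zero]

lemma primaryComponent_anti {I : Ideal R} (h : I ≤ J) :
    J.primaryComponent M ≤ I.primaryComponent M :=
  fun _ hx ↦ have ⟨t, ht⟩ := mem_primaryComponent.1 hx
    mem_primaryComponent.2 ⟨t, fun a ha ↦ ht a (Ideal.pow_right_mono h t ha)⟩

lemma map_primaryComponent_le (f : M →ₗ[R] N) :
    (J.primaryComponent M).map f ≤ J.primaryComponent N := by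
  rintro _ ⟨x, hx, rfl⟩
  exact Ideal.primaryComponent_map_mem J f ⟨x, hx⟩

lemma comap_primaryComponent_of_injective {f : M →ₗ[R] N} (hf : Function.Injective f) :
    (J.primaryComponent N).comap f = J.primaryComponent M := by
  ext x
  simp only [Submodule.mem_comap, mem_primaryComponent, ← map_smul, map_eq_zero_iff f hf]

lemma primaryComponent_eq_top_of_surjective {f : M →ₗ[R] N} (hf : Function.Surjective f)
    (h : J.primaryComponent M = ⊤) : J.primaryComponent N = ⊤ := by
  rw [eq_top_iff, ← LinearMap.range_eq_top.2 hf, ← Submodule.map_top, ← h]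
  exact map_primaryComponent_le f

lemma primaryComponent_eq_top_of_injective {f : M →ₗ[R] N} (hf : Function.Injective f)
    (h : J.primaryComponent N = ⊤) : J.primaryComponent M = ⊤ := by
  rw [← comap_primaryComponent_of_injective hf, h, Submodule.comap_top]

lemma primaryComponent_primaryComponent : J.primaryComponent (J.primaryComponent M) = ⊤ := by
  rw [← comap_primaryComponent_of_injective (J.primaryComponent M).injective_subtype,
    Submodule.comap_subtype_self]

lemma primaryComponent_sup {K L : Ideal R} (h : L.primaryComponent M = ⊤) :
    (K ⊔ L).primaryComponent M = K.primaryComponent M := by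
  refine le_antisymm (primaryComponent_anti le_sup_left) fun x hx ↦ ?_
  obtain ⟨s, hs⟩ := mem_primaryComponent.1 hx
  obtain ⟨t, ht⟩ := mem_primaryComponent.1 (h ▸ Submodule.mem_top : x ∈ L.primaryComponent M)
  refine mem_primaryComponent.2 ⟨s + t, fun a ha ↦ ?_⟩
  obtain ⟨b, hb, c, hc, rfl⟩ := Submodule.mem_sup.1 (Ideal.sup_pow_add_le_pow_sup_pow ha)
  rw [add_smul, hs b hb, ht c hc, add_zero]

lemma exists_pow_smul_eq_zero_of_fg {P : Submodule R M} (hP : P.FG) (h : P ≤ J.primaryComponent M) :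
    ∃ t : ℕ, ∀ a ∈ J ^ t, ∀ x ∈ P, a • x = 0 := by
  induction P, hP using Submodule.fg_induction with
  | singleton x =>
    obtain ⟨t, ht⟩ := mem_primaryComponent.1 (h (Submodule.mem_span_singleton_self x))
    refine ⟨t, fun a ha y hy ↦ ?_⟩
    obtain ⟨c, rfl⟩ := Submodule.mem_span_singleton.1 hy
    rw [smul_comm, ht a ha, smul_zero]
  | sup P₁ P₂ _ _ h₁ h₂ =>
    obtain ⟨s, hs⟩ := h₁ (le_sup_left.trans h)
    obtain ⟨t, ht⟩ := h₂ (le_sup_right.trans h)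
    refine ⟨s + t, fun a ha y hy ↦ ?_⟩
    obtain ⟨y₁, hy₁, y₂, hy₂, rfl⟩ := Submodule.mem_sup.1 hy
    rw [smul_add, hs a (Ideal.pow_le_pow_right (Nat.le_add_right s t) ha) y₁ hy₁,
      ht a (Ideal.pow_le_pow_right (Nat.le_add_left t s) ha) y₂ hy₂, add_zero]

lemma mem_primaryComponent_of_forall_smul_mem {t : ℕ} (hJ : (J ^ t).FG) {x : M}
    (h : ∀ a ∈ J ^ t, a • x ∈ J.primaryComponent M) : x ∈ J.primaryComponent M := by
  obtain ⟨s, hs⟩ := exists_pow_smul_eq_zero_of_fg (J := J)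
    (Submodule.FG.map (LinearMap.toSpanSingleton R M x) hJ) (by rintro _ ⟨a, ha, rfl⟩; exact h a ha)
  refine mem_primaryComponent.2 ⟨s + t, fun a ha ↦ ?_⟩
  rw [pow_add] at ha
  induction ha using Submodule.mul_induction_on' with
  | mem_mul_mem b hb c hc =>
    rw [mul_smul]
    exact hs b hb _ ⟨c, hc, rfl⟩
  | add b _ c _ hb hc => rw [add_smul, hb, hc, add_zero]

lemma primaryComponent_quotient_primaryComponent (hJ : J.FG) :
    J.primaryComponent (M ⧸ J.primaryComponent M) = ⊥ := by
  refine eq_bot_iff.2 fun x hx ↦ ?_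
  obtain ⟨t, ht⟩ := mem_primaryComponent.1 hx
  obtain ⟨x, rfl⟩ := Submodule.mkQ_surjective _ x
  exact (Submodule.Quotient.mk_eq_zero _).2 (mem_primaryComponent_of_forall_smul_mem (hJ.pow)
    fun a ha ↦ (Submodule.Quotient.mk_eq_zero _).1 (ht a ha))

lemma primaryComponent_span_singleton_eq_bot_iff {y : R} :
    (Ideal.span {y}).primaryComponent M = ⊥ ↔ Function.Injective fun x : M ↦ y • x := by
  refine Iff.trans ?_ (injective_iff_map_eq_zero (LinearMap.lsmul R M y)).symm
  refine ⟨fun h x hx ↦ ?_, fun h ↦ eq_bot_iff.2 fun x hx ↦ ?_⟩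
  · rw [← Submodule.mem_bot R, ← h]
    exact mem_primaryComponent_span_singleton.2 ⟨1, by simpa using hx⟩
  · obtain ⟨t, ht⟩ := mem_primaryComponent_span_singleton.1 hx
    induction t with
    | zero => simpa using ht
    | succ t ih => exact ih (h _ (by rwa [pow_succ', mul_smul] at ht))

end PrimaryComponent

section ZerothLocalCohomology

variable {R : Type u} [CommRing R]

/-- Evaluation at `1`, as a natural transformation `Hom(R/K, -) ⟶ 𝟭`. -/
noncomputable def homQuotientEvalOne (K : Ideal R) :
    (linearCoyoneda R (ModuleCat.{u} R)).obj (op (ModuleCat.of R (R ⧸ K))) ⟶ 𝟭 _ where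
  app _ := ModuleCat.ofHom
    { toFun f := f.hom (Ideal.Quotient.mk _ 1)
      map_add' _ _ := rfl
      map_smul' _ _ := rfl }
  naturality _ _ _ := rfl

/-- The embedding of functors `Ext⁰(R/K, -) ⟶ 𝟭`. -/
noncomputable def extZeroQuotientι (K : Ideal R) :
    (Ext R (ModuleCat.{u} R) 0).obj (op (ModuleCat.of R (R ⧸ K))) ⟶ 𝟭 _ :=
  (linearCoyonedaIsoExtZero R (ModuleCat.{u} R)).inv.app _ ≫ homQuotientEvalOne K

lemma homQuotientEvalOne_injective (K : Ideal R) (M : ModuleCat.{u} R) :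
    Function.Injective ((homQuotientEvalOne K).app M) :=
  fun _ _ h ↦ ModuleCat.hom_ext (Submodule.linearMap_qext _ (LinearMap.ext_ring h))

lemma range_homQuotientEvalOne (K : Ideal R) (M : ModuleCat.{u} R) :
    Set.range ((homQuotientEvalOne K).app M) = {x | ∀ a ∈ K, a • x = 0} := by
  ext x
  refine ⟨?_, fun hx ↦ ⟨ModuleCat.ofHom (Submodule.liftQ _ (LinearMap.toSpanSingleton R M x) hx),
    one_smul R x⟩⟩
  rintro ⟨f, rfl⟩ a ha
  have h : a • Ideal.Quotient.mk K 1 = 0 := by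
    simpa [Algebra.smul_def] using Ideal.Quotient.eq_zero_iff_mem.2 ha
  exact (map_smul f.hom a (Ideal.Quotient.mk K 1)).symm.trans
    ((congrArg f.hom h).trans (map_zero _))

lemma extZeroQuotientι_injective (K : Ideal R) (M : ModuleCat.{u} R) :
    Function.Injective ((extZeroQuotientι K).app M) :=
  (homQuotientEvalOne_injective K M).comp (((linearCoyonedaIsoExtZero R (ModuleCat.{u} R)).app
    (op (ModuleCat.of R (R ⧸ K)))).symm.app M).toLinearEquiv.injective

lemma range_extZeroQuotientι (K : Ideal R) (M : ModuleCat.{u} R) :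
    Set.range ((extZeroQuotientι K).app M) = {x | ∀ a ∈ K, a • x = 0} := by
  rw [← range_homQuotientEvalOne]
  exact (((linearCoyonedaIsoExtZero R (ModuleCat.{u} R)).app
    (op (ModuleCat.of R (R ⧸ K)))).symm.app M).toLinearEquiv.surjective.range_comp
      ((homQuotientEvalOne K).app M)

lemma ext_map_extZeroQuotientι {K L : Ideal R} (f : R ⧸ L →ₗ[R] R ⧸ K)
    (hf : f (Ideal.Quotient.mk L 1) = Ideal.Quotient.mk K 1) :
    (Ext R (ModuleCat.{u} R) 0).map (ModuleCat.ofHom f).op ≫ extZeroQuotientι L =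
      extZeroQuotientι K := by
  rw [extZeroQuotientι, ← Category.assoc, NatTrans.naturality, Category.assoc]
  refine congrArg _ ?_
  ext M x
  exact congrArg _ hf

variable (J : Ideal R)

/-- The embedding of functors `H⁰_J ⟶ 𝟭`. -/
noncomputable def localCohomologyZeroι : localCohomology J 0 ⟶ 𝟭 (ModuleCat.{u} R) :=
  colimit.desc (localCohomology.diagram (localCohomology.idealPowersDiagram J) 0)
    { pt := 𝟭 _
      ι :=
        { app j := extZeroQuotientι (J ^ j.unop.unop)
          naturality _ _ _ :=
            (ext_map_extZeroQuotientι _ rfl).trans (Category.comp_id _).symm } }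

variable {J}

instance preservesColimitsOfShape_nat_op_op_forget :
    PreservesColimitsOfShape ℕᵒᵖᵒᵖ (forget (ModuleCat.{u} R)) :=
  have : PreservesFilteredColimitsOfSize.{0, 0} (forget (ModuleCat.{u} R)) :=
    preservesFilteredColimitsOfSize_shrink _
  PreservesFilteredColimitsOfSize.preserves_filtered_colimits _

/-- The canonical map from the stage `Ext^i(R/J^t, -)` to `H^i_J`. -/
noncomputable def extToLocalCohomology (J : Ideal R) (i t : ℕ) :
    (Ext R (ModuleCat.{u} R) i).obj (op (ModuleCat.of R (R ⧸ J ^ t))) ⟶ localCohomology J i :=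
  colimit.ι (localCohomology.diagram (localCohomology.idealPowersDiagram J) i) (op (op t))

lemma exists_extToLocalCohomology_eq {i : ℕ} {M : ModuleCat.{u} R}
    (x : (localCohomology J i).obj M) :
    ∃ t y, (extToLocalCohomology J i t).app M y = x := by
  obtain ⟨j, y, hy⟩ := Concrete.isColimit_exists_rep _
    (isColimitOfPreserves ((evaluation _ _).obj M) (colimit.isColimit
      (localCohomology.diagram (localCohomology.idealPowersDiagram J) i))) x
  exact ⟨j.unop.unop, y, hy⟩

lemma extToLocalCohomology_comp_localCohomologyZeroι (t : ℕ) :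
    extToLocalCohomology J 0 t ≫ localCohomologyZeroι J = extZeroQuotientι (J ^ t) :=
  colimit.ι_desc _ _

lemma localCohomologyZeroι_extToLocalCohomology (t : ℕ) {M : ModuleCat.{u} R}
    (y : ((Ext R (ModuleCat.{u} R) 0).obj (op (ModuleCat.of R (R ⧸ J ^ t)))).obj M) :
    (localCohomologyZeroι J).app M ((extToLocalCohomology J 0 t).app M y) =
      (extZeroQuotientι (J ^ t)).app M y := by
  rw [← extToLocalCohomology_comp_localCohomologyZeroι]
  rfl

variable (J) in
lemma localCohomologyZeroι_injective (M : ModuleCat.{u} R) :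
    Function.Injective ((localCohomologyZeroι J).app M) := by
  refine (injective_iff_map_eq_zero _).2 fun x hx ↦ ?_
  obtain ⟨t, y, rfl⟩ := exists_extToLocalCohomology_eq x
  rw [localCohomologyZeroι_extToLocalCohomology] at hx
  rw [(injective_iff_map_eq_zero _).1 (extZeroQuotientι_injective _ M) y hx, map_zero]

variable (J) in
lemma range_localCohomologyZeroι (M : ModuleCat.{u} R) :
    LinearMap.range ((localCohomologyZeroι J).app M).hom = J.primaryComponent M := by
  ext x
  refine Iff.trans ⟨?_, ?_⟩ mem_primaryComponent.symm
  · rintro ⟨y, rfl⟩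
    obtain ⟨t, y, rfl⟩ := exists_extToLocalCohomology_eq y
    exact ⟨t, (range_extZeroQuotientι _ M).subset
      ⟨y, (localCohomologyZeroι_extToLocalCohomology t y).symm⟩⟩
  · rintro ⟨t, ht⟩
    obtain ⟨y, hy⟩ := (range_extZeroQuotientι (J ^ t) M).superset ht
    exact ⟨_, (localCohomologyZeroι_extToLocalCohomology t y).trans hy⟩

instance mono_localCohomologyZeroι_app (M : ModuleCat.{u} R) :
    Mono ((localCohomologyZeroι J).app M) :=
  (ModuleCat.mono_iff_injective _).2 (localCohomologyZeroι_injective J M)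

variable (J) in
/-- `H⁰_J(M)` is the submodule of elements of `M` killed by a power of `J`. -/
noncomputable def primaryComponentIsoLocalCohomologyZero (M : ModuleCat.{u} R) :
    ModuleCat.of R (J.primaryComponent M) ≅ (localCohomology J 0).obj M :=
  ((LinearEquiv.ofInjective _ (localCohomologyZeroι_injective J M)).trans
    (LinearEquiv.ofEq _ _ (range_localCohomologyZeroι J M))).toModuleIso.symm

lemma isZero_localCohomology_zero_iff {M : ModuleCat.{u} R} :
    IsZero ((localCohomology J 0).obj M) ↔ J.primaryComponent M = ⊥ := by
  rw [← (primaryComponentIsoLocalCohomologyZero J M).isZero_iff, ModuleCat.isZero_iff_subsingleton,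
    Submodule.subsingleton_iff_eq_bot]

instance mono_localCohomology_zero_map {M N : ModuleCat.{u} R} (f : M ⟶ N) [Mono f] :
    Mono ((localCohomology J 0).map f) :=
  have : Mono ((localCohomology J 0).map f ≫ (localCohomologyZeroι J).app N) := by
    rw [NatTrans.naturality]
    exact mono_comp _ _
  mono_of_mono _ ((localCohomologyZeroι J).app N)

lemma epi_localCohomology_zero_map_iff {M N : ModuleCat.{u} R} {f : M ⟶ N} :
    Epi ((localCohomology J 0).map f) ↔
      J.primaryComponent N ≤ (J.primaryComponent M).map f.hom := by
  have h : f.hom ∘ₗ ((localCohomologyZeroι J).app M).hom =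
      ((localCohomologyZeroι J).app N).hom ∘ₗ ((localCohomology J 0).map f).hom :=
    congrArg ModuleCat.Hom.hom ((localCohomologyZeroι J).naturality f).symm
  rw [ModuleCat.epi_iff_range_eq_top, ← range_localCohomologyZeroι, ← range_localCohomologyZeroι,
    ← LinearMap.range_comp, h, LinearMap.range_comp,
    LinearMap.range_eq_map ((localCohomologyZeroι J).app N).hom]
  exact top_le_iff.symm.trans
    (Submodule.map_le_map_iff_of_injective (localCohomologyZeroι_injective J N) _ _).symm

lemma isIso_localCohomology_map_f {S : ShortComplex (ModuleCat.{u} R)} (hS : S.ShortExact)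
    (h₃ : ∀ q, IsZero ((localCohomology J q).obj S.X₃)) :
    ∀ i, IsIso ((localCohomology J i).map S.f)
  | 0 =>
    have := hS.mono_f
    have := (localCohomology_exact₂ (J := J) hS 0).2.epi_f ((h₃ 0).eq_of_tgt _ _)
    isIso_of_mono_of_epi _
  | i + 1 =>
    have := (localCohomology_exact₁ (J := J) hS i).2.mono_g ((h₃ i).eq_of_src _ _)
    have := (localCohomology_exact₂ (J := J) hS (i + 1)).2.epi_f ((h₃ (i + 1)).eq_of_tgt _ _)
    isIso_of_mono_of_epi _

end ZerothLocalCohomology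

section InjectivePrimaryComponent

variable {R : Type u} [CommRing R]

lemma exists_comp_eq_of_ker_le_ker {A B E : Type u} [AddCommGroup A] [Module R A] [AddCommGroup B]
    [Module R B] [AddCommGroup E] [Module R E] [Module.Injective R E] {g : A →ₗ[R] B}
    {f : A →ₗ[R] E} (h : LinearMap.ker g ≤ LinearMap.ker f) : ∃ q : B →ₗ[R] E, q ∘ₗ g = f := by
  obtain ⟨q, hq⟩ := Module.Injective.out ((LinearMap.ker g).liftQ g le_rfl)
    (LinearMap.ker_eq_bot.1 (Submodule.ker_liftQ_eq_bot _ _ _ le_rfl))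
    ((LinearMap.ker g).liftQ f h)
  exact ⟨q, LinearMap.ext fun x ↦ hq (Submodule.Quotient.mk x)⟩

variable [IsNoetherianRing R] {J : Ideal R}

lemma exists_pow_inf_le_pow_smul {M : Type v} [AddCommGroup M] [Module R M] [Module.Finite R M]
    (N : Submodule R M) (t : ℕ) : ∃ k, J ^ k • ⊤ ⊓ N ≤ J ^ t • N := by
  obtain ⟨k, hk⟩ := J.exists_pow_inf_eq_pow_smul N
  refine ⟨t + k, (hk _ (Nat.le_add_left k t)).le.trans ?_⟩
  rw [Nat.add_sub_cancel]
  exact smul_mono_right _ inf_le_right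

lemma exists_pow_inf_le_map_ker {M : Type v} [AddCommGroup M] [Module R M] [Module.Finite R M]
    {N : Submodule R M} {P : Type w} [AddCommGroup P] [Module R P] (f : N →ₗ[R] P)
    (hP : J.primaryComponent P = ⊤) :
    ∃ k, J ^ k • ⊤ ⊓ N ≤ (LinearMap.ker f).map N.subtype := by
  obtain ⟨t, ht⟩ := exists_pow_smul_eq_zero_of_fg (J := J) (P := LinearMap.range f)
    Submodule.FG.of_finite (hP ▸ le_top)
  obtain ⟨k, hk⟩ := exists_pow_inf_le_pow_smul (J := J) N t
  refine ⟨k, hk.trans ?_⟩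
  nth_rw 1 [← N.map_subtype_top, ← Submodule.map_smul'']
  refine Submodule.map_mono (Submodule.smul_le.2 fun a ha x _ ↦ ?_)
  rw [LinearMap.mem_ker, map_smul, ht a ha _ ⟨x, rfl⟩]

instance injective_primaryComponent (E : Type u) [AddCommGroup E] [Module R E]
    [Module.Injective R E] : Module.Injective R (J.primaryComponent E) := by
  refine Module.Baer.injective fun 𝔞 f ↦ ?_
  obtain ⟨k, hk⟩ := exists_pow_inf_le_map_ker f (primaryComponent_primaryComponent (J := J))
  have hker : LinearMap.ker ((J ^ k).mkQ ∘ₗ 𝔞.subtype) ≤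
      LinearMap.ker ((J.primaryComponent E).subtype ∘ₗ f) := by
    intro x hx
    obtain ⟨y, hy, hyx⟩ := hk ⟨by simpa using (Submodule.Quotient.mk_eq_zero (J ^ k)).1 hx, x.2⟩
    obtain rfl := Subtype.ext hyx
    exact congrArg (J.primaryComponent E).subtype hy
  obtain ⟨q, hq⟩ := exists_comp_eq_of_ker_le_ker hker
  have hq1 : q (Submodule.Quotient.mk 1) ∈ J.primaryComponent E := by
    refine mem_primaryComponent.2 ⟨k, fun a ha ↦ ?_⟩
    rw [← map_smul, ← Submodule.Quotient.mk_smul, (Submodule.Quotient.mk_eq_zero _).2, map_zero]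
    simpa using ha
  refine ⟨LinearMap.toSpanSingleton R _ ⟨_, hq1⟩, fun x hx ↦ Subtype.ext ?_⟩
  refine Eq.trans ?_ (LinearMap.congr_fun hq ⟨x, hx⟩)
  change x • q (Submodule.Quotient.mk 1) = q (Submodule.Quotient.mk x)
  rw [← map_smul, ← Submodule.Quotient.mk_smul, smul_eq_mul, mul_one]

end InjectivePrimaryComponent

section InjectiveEmbedding

/-- The short exact sequence `0 ⟶ N ⟶ M ⟶ M ⧸ N ⟶ 0`. -/
abbrev submoduleShortComplex {R : Type u} [Ring R] {M : Type v} [AddCommGroup M] [Module R M]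
    (N : Submodule R M) : ShortComplex (ModuleCat.{v} R) :=
  ModuleCat.shortComplexOfCompEqZero N.subtype N.mkQ (by ext; simp)

lemma submoduleShortComplex_shortExact {R : Type u} [Ring R] {M : Type v} [AddCommGroup M]
    [Module R M] (N : Submodule R M) : (submoduleShortComplex N).ShortExact :=
  ModuleCat.shortComplex_shortExact _ (LinearMap.exact_subtype_mkQ N) N.injective_subtype
    N.mkQ_surjective

variable {R : Type u} [CommRing R] [IsNoetherianRing R]

instance injective_of_primaryComponent (J : Ideal R) (E : ModuleCat.{u} R) [Injective E] :
    Injective (ModuleCat.of R (J.primaryComponent E)) :=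
  have : Module.Injective R E := Module.injective_module_of_injective_object R E
  Module.injective_object_of_injective_module R _

lemma exists_mono_injective_of_primaryComponent_eq_top {J : Ideal R} {M : ModuleCat.{u} R}
    (h : J.primaryComponent M = ⊤) :
    ∃ (E : ModuleCat.{u} R) (f : M ⟶ E), Injective E ∧ Mono f ∧ J.primaryComponent E = ⊤ := by
  let E : ModuleCat.{u} R := Injective.under M
  let f : M ⟶ E := Injective.ι M
  have : Injective E := Injective.injective_under M
  refine ⟨ModuleCat.of R (J.primaryComponent E), ModuleCat.ofHom
    (f.hom.codRestrict _ fun x ↦ map_primaryComponent_le f.hom ⟨x, h ▸ Submodule.mem_top, rfl⟩),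
    inferInstance, ?_, primaryComponent_primaryComponent⟩
  exact (ModuleCat.mono_iff_injective _).2
    (((ModuleCat.mono_iff_injective f).1 (Injective.ι_mono M)).codRestrict _)

lemma exists_mono_injective_of_primaryComponent_eq_bot {J : Ideal R} {M : ModuleCat.{u} R}
    (h : J.primaryComponent M = ⊥) :
    ∃ (E : ModuleCat.{u} R) (f : M ⟶ E), Injective E ∧ Mono f ∧ J.primaryComponent E = ⊥ := by
  let E : ModuleCat.{u} R := Injective.under M
  let f : M ⟶ E := Injective.ι M
  have : Injective E := Injective.injective_under M
  have : Injective (submoduleShortComplex (J.primaryComponent E)).X₃ :=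
    injective_X₃_of_shortExact (submoduleShortComplex_shortExact _)
  refine ⟨_, f ≫ (submoduleShortComplex (J.primaryComponent E)).g, this, ?_,
    primaryComponent_quotient_primaryComponent J.fg_of_isNoetherianRing⟩
  rw [ModuleCat.mono_iff_ker_eq_bot, eq_bot_iff, ← h,
    ← comap_primaryComponent_of_injective ((ModuleCat.mono_iff_injective f).1 (Injective.ι_mono M))]
  exact fun x hx ↦ (Submodule.Quotient.mk_eq_zero (J.primaryComponent E)).1 hx

end InjectiveEmbedding

section Vanishing

variable {R : Type u} [CommRing R]

lemma mono_smul_id_iff {y : R} {M : ModuleCat.{u} R} :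
    Mono (y • 𝟙 M) ↔ (Ideal.span {y}).primaryComponent M = ⊥ :=
  (ModuleCat.mono_iff_injective _).trans primaryComponent_span_singleton_eq_bot_iff.symm

lemma isZero_localCohomology_succ_succ_iff_of_injective {J : Ideal R}
    {S : ShortComplex (ModuleCat.{u} R)} (hS : S.ShortExact) [Injective S.X₂] {i : ℕ} :
    IsZero ((localCohomology J (i + 2)).obj S.X₁) ↔ IsZero ((localCohomology J (i + 1)).obj S.X₃) :=
  ⟨isZero_localCohomology_X₃ hS (isZero_localCohomology_succ_of_injective i _), fun h ↦
    isZero_localCohomology_succ_X₁ hS h (isZero_localCohomology_succ_of_injective (i + 1) _)⟩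

lemma isZero_localCohomology_one_iff_of_injective {J : Ideal R}
    {S : ShortComplex (ModuleCat.{u} R)} (hS : S.ShortExact) [Injective S.X₂] :
    IsZero ((localCohomology J 1).obj S.X₁) ↔
      J.primaryComponent S.X₃ ≤ (J.primaryComponent S.X₂).map S.g.hom :=
  (isZero_localCohomology_succ_X₁_iff_epi hS
    (isZero_localCohomology_succ_of_injective 0 _)).trans epi_localCohomology_zero_map_iff

lemma isZero_localCohomology_succ_of_ker_of_range {J : Ideal R} {M L : Type u} [AddCommGroup M]
    [Module R M] [AddCommGroup L] [Module R L] (f : M →ₗ[R] L) {i : ℕ}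
    (hker : IsZero ((localCohomology J (i + 1)).obj (ModuleCat.of R (LinearMap.ker f))))
    (hL : IsZero ((localCohomology J (i + 1)).obj (ModuleCat.of R L)))
    (hcoker : IsZero ((localCohomology J i).obj (ModuleCat.of R (L ⧸ LinearMap.range f)))) :
    IsZero ((localCohomology J (i + 1)).obj (ModuleCat.of R M)) := by
  have hrange : IsZero ((localCohomology J (i + 1)).obj (ModuleCat.of R (LinearMap.range f))) :=
    isZero_localCohomology_succ_X₁ (submoduleShortComplex_shortExact (LinearMap.range f)) hcoker hL
  exact isZero_localCohomology_X₂ (submoduleShortComplex_shortExact (LinearMap.ker f)) hker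
    (hrange.of_iso ((localCohomology J (i + 1)).mapIso f.quotKerEquivRange.toModuleIso))

lemma primaryComponent_ker_mkLinearMap_powers {M : Type u} [AddCommGroup M] [Module R M] (y : R) :
    (Ideal.span {y}).primaryComponent
      (LinearMap.ker (LocalizedModule.mkLinearMap (.powers y) M)) = ⊤ := by
  rw [← comap_primaryComponent_of_injective (Submodule.injective_subtype _),
    Submodule.comap_subtype_eq_top]
  intro x hx
  obtain ⟨⟨_, t, rfl⟩, ht⟩ := (IsLocalizedModule.eq_zero_iff (.powers y) _).1 hx
  exact mem_primaryComponent_span_singleton.2 ⟨t, ht⟩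

lemma primaryComponent_quotient_range_mkLinearMap_powers {M : Type u} [AddCommGroup M] [Module R M]
    (y : R) : (Ideal.span {y}).primaryComponent
      (LocalizedModule (.powers y) M ⧸
        LinearMap.range (LocalizedModule.mkLinearMap (.powers y) M)) = ⊤ := by
  refine eq_top_iff.2 fun x _ ↦ ?_
  obtain ⟨x, rfl⟩ := Submodule.mkQ_surjective _ x
  obtain ⟨⟨m, _, t, rfl⟩, ht⟩ :=
    IsLocalizedModule.surj (.powers y) (LocalizedModule.mkLinearMap (.powers y) M) x
  exact mem_primaryComponent_span_singleton.2
    ⟨t, (Submodule.Quotient.mk_eq_zero _).2 ⟨m, ht.symm⟩⟩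

lemma primaryComponent_localizedModule_eq_top {I : Ideal R} {M : Type u} [AddCommGroup M]
    [Module R M] (S : Submonoid R) (h : I.primaryComponent M = ⊤) :
    I.primaryComponent (LocalizedModule S M) = ⊤ := by
  refine eq_top_iff.2 fun x _ ↦ ?_
  induction x with | _ m s
  obtain ⟨t, ht⟩ := mem_primaryComponent.1 (h ▸ Submodule.mem_top : m ∈ I.primaryComponent M)
  refine mem_primaryComponent.2 ⟨t, fun a ha ↦ ?_⟩
  rw [LocalizedModule.smul'_mk, ht a ha, LocalizedModule.zero_mk]

instance isIso_smul_id_localizedModule_powers {M : Type u} [AddCommGroup M] [Module R M] (y : R) :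
    IsIso (y • 𝟙 (ModuleCat.of R (LocalizedModule (.powers y) M))) := by
  have h := (Module.End.isUnit_iff _).1 (IsLocalizedModule.map_units
    (LocalizedModule.mkLinearMap (.powers y) M) ⟨y, Submonoid.mem_powers y⟩)
  exact (ConcreteCategory.isIso_iff_bijective _).2 h

lemma primaryComponent_cokernel_eq_top {J : Ideal R} {M E : ModuleCat.{u} R} (f : M ⟶ E)
    (hE : J.primaryComponent E = ⊤) : J.primaryComponent (cokernel f : ModuleCat.{u} R) = ⊤ :=
  primaryComponent_eq_top_of_surjective (f := (cokernel.π f).hom)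
    ((ModuleCat.epi_iff_surjective (cokernel.π f)).1 inferInstance) hE

variable [IsNoetherianRing R] {J : Ideal R}

lemma isZero_localCohomology_of_isIso_smul {y : R} (hy : y ∈ J) (M : ModuleCat.{u} R)
    [IsIso (y • 𝟙 M)] (p : ℕ) : IsZero ((localCohomology J p).obj M) := by
  have hM : (Ideal.span {y}).primaryComponent M = ⊥ := mono_smul_id_iff.1 inferInstance
  induction p generalizing M with
  | zero =>
    rw [isZero_localCohomology_zero_iff, eq_bot_iff, ← hM]
    exact primaryComponent_anti ((Ideal.span_singleton_le_iff_mem J).2 hy)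
  | succ p ih =>
    obtain ⟨E, f, _, _, hE⟩ := exists_mono_injective_of_primaryComponent_eq_bot hM
    have := mono_smul_id_iff.2 hE
    have := isIso_smul_id_of_mono (y := y) E
    have := isIso_smul_id_cokernel (y := y) f
    exact isZero_localCohomology_succ_X₁ (shortExact_cokernel f)
      (ih _ (mono_smul_id_iff.1 inferInstance)) (isZero_localCohomology_succ_of_injective p E)

lemma exists_mono_injective_forall_isZero_localCohomology {M : ModuleCat.{u} R}
    (hM : J.primaryComponent M = ⊥) : ∃ (E : ModuleCat.{u} R) (f : M ⟶ E),
      Injective E ∧ Mono f ∧ ∀ q, IsZero ((localCohomology J q).obj E) := by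
  obtain ⟨E, f, hE, hf, hE₀⟩ := exists_mono_injective_of_primaryComponent_eq_bot hM
  refine ⟨E, f, hE, hf, fun q ↦ ?_⟩
  cases q with
  | zero => exact isZero_localCohomology_zero_iff.2 hE₀
  | succ q => exact isZero_localCohomology_succ_of_injective q E

lemma isZero_localCohomology_of_le {I : Ideal R} (hIJ : I ≤ J) {M : ModuleCat.{u} R}
    (hM : ∀ q, IsZero ((localCohomology I q).obj M)) (p : ℕ) :
    IsZero ((localCohomology J p).obj M) := by
  induction p generalizing M with
  | zero =>
    rw [isZero_localCohomology_zero_iff, eq_bot_iff, ← isZero_localCohomology_zero_iff.1 (hM 0)]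
    exact primaryComponent_anti hIJ
  | succ p ih =>
    obtain ⟨E, f, _, _, hE⟩ :=
      exists_mono_injective_forall_isZero_localCohomology (isZero_localCohomology_zero_iff.1 (hM 0))
    have hN (q : ℕ) : IsZero ((localCohomology I q).obj (cokernel f)) :=
      isZero_localCohomology_X₃ (shortExact_cokernel f) (hE q) (hM (q + 1))
    exact isZero_localCohomology_succ_X₁ (shortExact_cokernel f) (ih hN)
      (isZero_localCohomology_succ_of_injective p E)

lemma isZero_localCohomology_succ_of_primaryComponent_eq_top {M : ModuleCat.{u} R}
    (hM : J.primaryComponent M = ⊤) (q : ℕ) : IsZero ((localCohomology J (q + 1)).obj M) := by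
  induction q generalizing M with
  | zero =>
    obtain ⟨E, f, _, _, hE⟩ := exists_mono_injective_of_primaryComponent_eq_top hM
    refine (isZero_localCohomology_one_iff_of_injective (shortExact_cokernel f)).2 ?_
    rw [hE, Submodule.map_top, (ModuleCat.epi_iff_range_eq_top _).1 (shortExact_cokernel f).epi_g]
    exact le_top
  | succ q ih =>
    obtain ⟨E, f, _, _, hE⟩ := exists_mono_injective_of_primaryComponent_eq_top hM
    exact (isZero_localCohomology_succ_succ_iff_of_injective (shortExact_cokernel f)).2
      (ih (primaryComponent_cokernel_eq_top f hE))

lemma isZero_localCohomology_sup_iff {K L : Ideal R} {M : ModuleCat.{u} R}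
    (hM : L.primaryComponent M = ⊤) {p : ℕ} :
    IsZero ((localCohomology (K ⊔ L) p).obj M) ↔ IsZero ((localCohomology K p).obj M) := by
  induction p generalizing M with
  | zero =>
    rw [isZero_localCohomology_zero_iff, isZero_localCohomology_zero_iff, primaryComponent_sup hM]
  | succ p ih =>
    obtain ⟨E, f, _, _, hE⟩ := exists_mono_injective_of_primaryComponent_eq_top hM
    have hS := shortExact_cokernel f
    have hN := primaryComponent_cokernel_eq_top f hE
    cases p with
    | zero =>
      refine (isZero_localCohomology_one_iff_of_injective hS).trans
        (Iff.trans ?_ (isZero_localCohomology_one_iff_of_injective hS).symm)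
      rw [primaryComponent_sup hE, primaryComponent_sup hN]
    | succ p =>
      exact (isZero_localCohomology_succ_succ_iff_of_injective hS).trans
        ((ih hN).trans (isZero_localCohomology_succ_succ_iff_of_injective hS).symm)

lemma isZero_localCohomology_sup_span_of_card_lt {I : Ideal R} (s : Finset R) {M : Type u}
    [AddCommGroup M] [Module R M] (hM : I.primaryComponent M = ⊤) {p : ℕ} (hp : s.card < p) :
    IsZero ((localCohomology (I ⊔ Ideal.span s) p).obj (ModuleCat.of R M)) := by
  classical
  induction s using Finset.induction_on generalizing M p with
  | empty =>
    obtain ⟨p, rfl⟩ := Nat.exists_eq_succ_of_ne_zero hp.ne_zero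
    simpa using isZero_localCohomology_succ_of_primaryComponent_eq_top (M := ModuleCat.of R M) hM p
  | insert y s hy ih =>
    rw [Finset.card_insert_of_notMem hy] at hp
    obtain ⟨p, rfl⟩ := Nat.exists_eq_succ_of_ne_zero hp.ne_zero
    rw [Finset.coe_insert, Ideal.span_insert, sup_comm (Ideal.span {y}), ← sup_assoc]
    have htors {N : Type u} [AddCommGroup N] [Module R N] (hN : I.primaryComponent N = ⊤)
        (hyN : (Ideal.span {y}).primaryComponent N = ⊤) {q : ℕ} (hq : s.card < q) :
        IsZero ((localCohomology (I ⊔ Ideal.span s ⊔ Ideal.span {y}) q).obj (ModuleCat.of R N)) :=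
      (isZero_localCohomology_sup_iff (M := ModuleCat.of R N) hyN).2 (ih hN hq)
    refine isZero_localCohomology_succ_of_ker_of_range
      (LocalizedModule.mkLinearMap (.powers y) M) ?_ ?_ ?_
    · exact htors (primaryComponent_eq_top_of_injective (Submodule.injective_subtype _) hM)
        (primaryComponent_ker_mkLinearMap_powers y) (by lia)
    · exact isZero_localCohomology_of_isIso_smul
        (Ideal.mem_sup_right (Ideal.mem_span_singleton_self y)) _ _
    · exact htors (primaryComponent_eq_top_of_surjective (Submodule.mkQ_surjective _)
        (primaryComponent_localizedModule_eq_top _ hM))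
        (primaryComponent_quotient_range_mkLinearMap_powers y) (by lia)

end Vanishing

section Dimension

lemma ringKrullDim_quotient_add_idealHeight_le {R : Type u} [CommRing R] (I : Ideal R) :
    ringKrullDim (R ⧸ I) + idealHeight I ≤ ringKrullDim R := by
  rw [ringKrullDim_quotient, ringKrullDim, Order.krullDim_eq_iSup_coheight]
  rcases isEmpty_or_nonempty (PrimeSpectrum.zeroLocus (R := R) I) with hV | hV
  · simp
  have : Nonempty (PrimeSpectrum R) := hV.map Subtype.val
  rw [← WithBot.coe_iSup (OrderTop.bddAbove _), ← WithBot.coe_add,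
    Order.krullDim_eq_iSup_height_add_coheight_of_nonempty, WithBot.coe_le_coe, ENat.iSup_add]
  refine iSup_le fun p ↦ le_trans ?_ (le_iSup _ p.1)
  rw [add_comm]
  exact add_le_add (iInf₂_le p.1 p.2)
    (Order.coheight_le_coheight_apply_of_strictMono _ (Subtype.strictMono_coe _) p)

lemma ne_top_of_idealHeight_ne_top {R : Type u} [CommRing R] {I : Ideal R}
    (hI : idealHeight I ≠ ⊤) : I ≠ ⊤ := by
  rintro rfl
  exact hI (iInf₂_eq_top.2 fun p hp ↦ absurd (top_le_iff.1 hp) p.isPrime.ne_top)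

lemma ne_top_and_exists_ringKrullDim_quotient_le_of_idealHeight_eq {R : Type u} [CommRing R]
    {I : Ideal R} {n h : ℕ} (hn : ringKrullDim R = n) (hh : idealHeight I = h) :
    I ≠ ⊤ ∧ ∃ d : ℕ, ringKrullDim (R ⧸ I) ≤ d ∧ n = d + h := by
  have hI : I ≠ ⊤ := ne_top_of_idealHeight_ne_top (hh ▸ ENat.natCast_ne_top h)
  have : Nontrivial (R ⧸ I) := Ideal.Quotient.nontrivial_iff.2 hI
  have hdim := ringKrullDim_quotient_add_idealHeight_le I
  obtain ⟨c, hc, -⟩ := WithBot.coe_le_iff.1 (ringKrullDim_nonneg_of_nontrivial (R := R ⧸ I))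
  rw [hc, hn, hh] at hdim
  replace hdim : c + h ≤ (n : ℕ∞) := WithBot.coe_le_coe.1 hdim
  lift c to ℕ using ne_top_of_le_ne_top (ENat.natCast_ne_top n) (le_self_add.trans hdim)
  have hcn : c + h ≤ n := by exact_mod_cast hdim
  refine ⟨hI, n - h, ?_, by lia⟩
  rw [hc]
  exact WithBot.coe_le_coe.2 (Nat.cast_le.2 (Nat.le_sub_of_add_le hcn))

lemma exists_finset_radical_span_eq_maximalIdeal (R : Type*) [CommRing R] [IsNoetherianRing R]
    [IsLocalRing R] : ∃ s : Finset R, s.card = ringKrullDim R ∧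
      (Ideal.span (s : Set R)).radical = IsLocalRing.maximalIdeal R := by
  obtain ⟨s, hs, hcard⟩ :=
    Ideal.exists_finset_card_eq_height_of_isNoetherianRing (IsLocalRing.maximalIdeal R)
  refine ⟨s, ?_, ?_⟩
  · rw [← IsLocalRing.maximalIdeal_height_eq_ringKrullDim, ← hcard]
    rfl
  · rw [← Ideal.sInf_minimalPrimes, Set.eq_singleton_iff_unique_mem.2 ⟨hs, fun p hp ↦ ?_⟩,
      sInf_singleton]
    have hpm := IsLocalRing.le_maximalIdeal hp.1.1.ne_top
    exact hpm.antisymm (hs.2 hp.1 hpm)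

lemma exists_finset_radical_sup_span_eq_maximalIdeal {R : Type*} [CommRing R] [IsNoetherianRing R]
    [IsLocalRing R] {I : Ideal R} (hI : I ≠ ⊤) :
    ∃ s : Finset R, s.card ≤ ringKrullDim (R ⧸ I) ∧
      (I ⊔ Ideal.span s).radical = IsLocalRing.maximalIdeal R := by
  classical
  have : Nontrivial (R ⧸ I) := Ideal.Quotient.nontrivial_iff.2 hI
  have := IsLocalRing.of_surjective' (Ideal.Quotient.mk I) Ideal.Quotient.mk_surjective
  have := IsLocalHom.of_surjective (Ideal.Quotient.mk I) Ideal.Quotient.mk_surjective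
  obtain ⟨s, hcard, hs⟩ := exists_finset_radical_span_eq_maximalIdeal (R ⧸ I)
  have hmk : (Ideal.span (s.image Quotient.out : Finset R)).map (Ideal.Quotient.mk I) =
      Ideal.span s := by
    simp [Ideal.map_span, Set.image_image]
  refine ⟨s.image Quotient.out, ?_, ?_⟩
  · rw [← hcard]
    exact_mod_cast Finset.card_image_le
  · rw [← Ideal.comap_map_quotientMk, hmk, ← Ideal.comap_radical, hs,
      IsLocalRing.maximalIdeal_comap]

lemma isZero_localCohomology_maximalIdeal_of_ringKrullDim_quotient_lt {R : Type u} [CommRing R]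
    [IsNoetherianRing R] [IsLocalRing R] {I : Ideal R} (hI : I ≠ ⊤) {p : ℕ}
    (hp : ringKrullDim (R ⧸ I) < p) {M : ModuleCat.{u} R} (hM : I.primaryComponent M = ⊤) :
    IsZero ((localCohomology (IsLocalRing.maximalIdeal R) p).obj M) := by
  obtain ⟨s, hs, hrad⟩ := exists_finset_radical_sup_span_eq_maximalIdeal hI
  have hsp : s.card < p := by exact_mod_cast hs.trans_lt hp
  have hrad' : (I ⊔ Ideal.span s).radical = (IsLocalRing.maximalIdeal R).radical := by
    rw [hrad, (IsLocalRing.maximalIdeal.isMaximal R).isPrime.radical]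
  exact (isZero_localCohomology_sup_span_of_card_lt s hM hsp).of_iso
    ((localCohomology.isoOfSameRadical hrad' p).app M).symm

lemma cohomologicalDimension_le_iff {R : Type u} [CommRing R] {I : Ideal R} {M : ModuleCat.{u} R}
    {h : ℕ} : cohomologicalDimension I M ≤ h ↔
      ∀ q, h < q → IsZero ((localCohomology I q).obj M) := by
  simp only [cohomologicalDimension, sSup_le_iff, Set.mem_ofPred_eq, forall_exists_index, and_imp,
    ModuleCat.isZero_iff_subsingleton, ← not_nontrivial_iff_subsingleton]
  refine ⟨fun H q hq hn ↦ ?_, fun H c q hc hn ↦ ?_⟩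
  · exact (Nat.cast_lt.2 hq).not_ge (H _ q rfl hn)
  · exact hc ▸ Nat.cast_le.2 (not_lt.1 fun hq ↦ H q hq hn)

end Dimension

section LocalCohomologyOfLocalCohomology

variable {R : Type u} [CommRing R] [IsNoetherianRing R]

lemma nonempty_iso_localCohomology_zero_of_isZero {I J : Ideal R} (hIJ : I ≤ J)
    {M : ModuleCat.{u} R} (hM : ∀ q, 0 < q → IsZero ((localCohomology I q).obj M)) (d : ℕ) :
    Nonempty ((localCohomology J d).obj ((localCohomology I 0).obj M) ≅
      (localCohomology J d).obj M) := by
  have hS := submoduleShortComplex_shortExact (I.primaryComponent M)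
  have hQ (q : ℕ) : IsZero ((localCohomology I q).obj
      (submoduleShortComplex (I.primaryComponent M)).X₃) := by
    cases q with
    | zero =>
      exact isZero_localCohomology_zero_iff.2
        (primaryComponent_quotient_primaryComponent I.fg_of_isNoetherianRing)
    | succ q =>
      exact isZero_localCohomology_X₃ hS (hM (q + 1) q.succ_pos)
        (isZero_localCohomology_succ_of_primaryComponent_eq_top primaryComponent_primaryComponent _)
  have := isIso_localCohomology_map_f hS (isZero_localCohomology_of_le hIJ hQ) d
  exact ⟨(localCohomology J d).mapIso (primaryComponentIsoLocalCohomologyZero I M).symm ≪≫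
    asIso ((localCohomology J d).map (submoduleShortComplex (I.primaryComponent M)).f)⟩

theorem nonempty_iso_localCohomology_localCohomology {I J : Ideal R} (hIJ : I ≤ J) {d : ℕ}
    (hd : ∀ (T : ModuleCat.{u} R) (p : ℕ), I.primaryComponent T = ⊤ → d < p →
      IsZero ((localCohomology J p).obj T)) {h : ℕ} {M : ModuleCat.{u} R}
    (hM : ∀ q, h < q → IsZero ((localCohomology I q).obj M)) :
    Nonempty ((localCohomology J d).obj ((localCohomology I h).obj M) ≅
      (localCohomology J (d + h)).obj M) := by
  induction h generalizing M with
  | zero => exact nonempty_iso_localCohomology_zero_of_isZero hIJ hM d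
  | succ h ih =>
    let T := submoduleShortComplex (I.primaryComponent M)
    have hT : T.ShortExact := submoduleShortComplex_shortExact (I.primaryComponent M)
    have hT₁ : I.primaryComponent T.X₁ = ⊤ := primaryComponent_primaryComponent
    have hTI (q : ℕ) := isZero_localCohomology_succ_of_primaryComponent_eq_top hT₁ q
    have hT₃ : I.primaryComponent T.X₃ = ⊥ :=
      primaryComponent_quotient_primaryComponent I.fg_of_isNoetherianRing
    obtain ⟨E, f, _, _, hEI⟩ := exists_mono_injective_forall_isZero_localCohomology hT₃
    have hEJ := isZero_localCohomology_of_le hIJ hEI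
    have hS := shortExact_cokernel f
    obtain ⟨e⟩ := ih (M := cokernel f) fun q hq ↦ isZero_localCohomology_X₃ hS (hEI q)
      (isZero_localCohomology_X₃ hT (hM (q + 1) (by lia)) (hTI (q + 1)))
    have := isIso_localCohomology_map_g hT (hTI h) (hTI (h + 1))
    have : IsIso ((localCohomology J (d + (h + 1))).map T.g) := isIso_localCohomology_map_g hT
      (hd T.X₁ (d + (h + 1)) hT₁ (by lia)) (hd T.X₁ (d + (h + 1) + 1) hT₁ (by lia))
    have := isIso_localCohomologyδ hS (hEI h) (hEI (h + 1))
    have := isIso_localCohomologyδ hS (hEJ (d + h)) (hEJ (d + h + 1))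
    let eI : (localCohomology I (h + 1)).obj M ≅ (localCohomology I h).obj (cokernel f) :=
      asIso ((localCohomology I (h + 1)).map T.g) ≪≫ (asIso (localCohomologyδ I hS h)).symm
    let eJ : (localCohomology J (d + h)).obj (cokernel f) ≅
        (localCohomology J (d + (h + 1))).obj M := asIso (localCohomologyδ J hS (d + h)) ≪≫
      (asIso ((localCohomology J (d + (h + 1))).map T.g)).symm
    exact ⟨(localCohomology J d).mapIso eI ≪≫ e ≪≫ eJ⟩

theorem localCohomology_maximalIdeal_localCohomology_iso_of_cd_eq_height_general [IsLocalRing R]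
    {I : Ideal R} (hI : I ≠ ⊤) {M : ModuleCat.{u} R} {d h : ℕ} (hd : ringKrullDim (R ⧸ I) ≤ d)
    (hM : cohomologicalDimension I M ≤ h) :
    Nonempty ((localCohomology (IsLocalRing.maximalIdeal R) d).obj ((localCohomology I h).obj M) ≅
      (localCohomology (IsLocalRing.maximalIdeal R) (d + h)).obj M) :=
  nonempty_iso_localCohomology_localCohomology (IsLocalRing.le_maximalIdeal hI)
    (fun _ _ hT hp ↦ isZero_localCohomology_maximalIdeal_of_ringKrullDim_quotient_lt hI
      (hd.trans_lt (by exact_mod_cast hp)) hT) (cohomologicalDimension_le_iff.1 hM)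

end LocalCohomologyOfLocalCohomology

/-- over a Noetherian local ring `R` of Krull dimension `n`, if
`cd(I) = ht(I) = h` then `H^{n-h}_m(H^h_I(R)) ≅ H^n_m(R)`. -/
theorem localCohomology_maximalIdeal_localCohomology_iso_of_cd_eq_height
    (R : Type u) [CommRing R] [IsNoetherianRing R] [IsLocalRing R] (n h : ℕ)
    (hn : ringKrullDim R = (n : WithBot ℕ∞)) (I : Ideal R)
    (hh : idealHeight I = (h : ℕ∞))
    (hI : cohomologicalDimension I (ModuleCat.of R R) = (h : ℕ∞)) :
    Nonempty ((localCohomology (IsLocalRing.maximalIdeal R) (n - h)).obj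
        ((localCohomology I h).obj (ModuleCat.of R R)) ≅
      (localCohomology (IsLocalRing.maximalIdeal R) n).obj (ModuleCat.of R R)) := by
  obtain ⟨htop, d, hd, rfl⟩ := ne_top_and_exists_ringKrullDim_quotient_le_of_idealHeight_eq hn hh
  simpa using localCohomology_maximalIdeal_localCohomology_iso_of_cd_eq_height_general htop hd hI.le
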